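/- Let x(t) = Σ_{k=1}^K A_k(t) e^{2πi φ_k(t)} belong to the class 𝒟_{ε₁,ε₂}, let g, σ, Ṽ_x, Ṽ^{g₃}_x, ω^{adp}_x be as in the context, let 0 < τ₀ < 1, let α > 0 solve |ĝ(α)| = τ₀, and set Z_k = {(t,η) : |η − φ'_k(t)| < α/σ(t)}. Let Λ₀(t) = K ε₁ I₁ + π ε₂ I₂ σ(t) Σ_k A_k(t) and Λ̃₀(t) = K ε₁ Ĩ₁ + π ε₂ Ĩ₂ σ(t) Σ_k A_k(t), where I_n = ∫|τ^n g(τ)|dτ and Ĩ_n = ∫|τ^n g'(τ)|dτ. Fix t and suppose ε̃₁ ≥ σ(t)Λ₀(t) + τ₀ Σ_k A_k(t). If |Ṽ_x(t,η)| > ε̃₁ and (t,η) ∈ Z_k, then |ω^{adp}_x(t,η) − φ'_k(t)| < bd₁, where bd₁ = (1/ε̃₁)(α Λ₀(t) + Λ̃₀(t)/(2π)) + (1/ε̃₁) max_{k∈{1,…,K}} Σ_{ℓ≠k} A_ℓ(t) |φ'_ℓ(t) − φ'_k(t)| · sup_{|u|<α} |ĝ(u + σ(t)(φ'_k(t) −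 φ'_ℓ(t)))|. -/

import Mathlib

/-!
The idea: substitute `τ = σ(t) v`, so that `V(t) = ∫ x(t + σ(t) v) g(v) e^{-2πi η σ(t) v} dv`.
Differentiating under the integral and integrating by parts in `v` (`hasDerivAt_adSTFT`) gives,
with `V'` and `V₃` the STFTs with windows `g'` and `u g'(u)`,
`∂ₜV + (σ'/σ) V₃ = (2πiη - σ'/σ) V - V'/σ`. After division by `2πi V` the term
`σ'/σ` is purely imaginary, so (`omegaAdp_eq`)
`ω - φ'_k = Re ((2πi (η - φ'_k) V - V'/σ) / (2πi V))`.

Freezing amplitudes and frequencies at time `t` (`component_bound`, `stft_approx`) yields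
`V = ∑ x_ℓ(t) ĝ(σ(η - φ'_ℓ)) + E` and `V' = ∑ x_ℓ(t) 2πi σ(η - φ'_ℓ) ĝ(σ(η - φ'_ℓ)) + E'`,
where `‖E‖ ≤ σ Λ₀` and `‖E'‖ ≤ σ Λ̃₀`; here the transform of `g'` is `2πi ξ ĝ(ξ)`. In the numerator
the `k`-th main terms cancel, the others carry the factor `φ'_ℓ - φ'_k`, and since
`|σ(η - φ'_k)| < α` they are bounded by the suprema in the statement. Dividing by
`‖V‖ > ε̃₁` gives the claim; the inequality is strict because `Λ₀ > 0`, which is where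
`g(0) ≠ 0` enters.
-/

open MeasureTheory Real Set Filter
open scoped Topology Real

noncomputable section

/-- `e2πi θ = exp(2πiθ)`. -/
def e2πi (θ : ℝ) : ℂ := Complex.exp (2 * (π : ℂ) * (θ : ℂ) * Complex.I)

/-- Fourier transform with the convention `ŵ(ξ) = ∫ w(u) e^{-2πiξu} du`. -/
def ft (w : ℝ → ℂ) (ξ : ℝ) : ℂ := ∫ u : ℝ, w u * e2πi (-(ξ * u))

/-- The adaptive STFT with window `w` and time-varying parameter `σ`. -/
def adSTFT (σ : ℝ → ℝ) (w : ℝ → ℂ) (x : ℝ → ℂ) (t η : ℝ) : ℂ :=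
  ∫ τ : ℝ, x (t + τ) * ((σ t : ℂ))⁻¹ * w (τ / σ t) * e2πi (-(η * τ))

/-- Absolute moments `I_n = ∫ |τ^n w(τ)| dτ`. -/
def absMom (w : ℝ → ℂ) (n : ℕ) : ℝ := ∫ τ : ℝ, |τ| ^ n * ‖w τ‖

/-- The window `g₁(u) = u g(u)`. -/
def g1w (g : ℝ → ℂ) : ℝ → ℂ := fun u => (u : ℂ) * g u

/-- The window `g₂(u) = u² g(u)`. -/
def g2w (g : ℝ → ℂ) : ℝ → ℂ := fun u => (u : ℂ) ^ 2 * g u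

/-- The window `g₃(u) = u g'(u)`. -/
def g3w (g : ℝ → ℂ) : ℝ → ℂ := fun u => (u : ℂ) * deriv g u

/-- `∂_t` of the adaptive STFT. -/
def adSTFTt (σ : ℝ → ℝ) (w : ℝ → ℂ) (x : ℝ → ℂ) (t η : ℝ) : ℂ :=
  deriv (fun s => adSTFT σ w x s η) t

/-- `∂_η` of the adaptive STFT. -/
def adSTFTη (σ : ℝ → ℝ) (w : ℝ → ℂ) (x : ℝ → ℂ) (t η : ℝ) : ℂ :=
  deriv (fun η' => adSTFT σ w x t η') η

/-- The complex phase transformation `ω^{adp,c}` of the adaptive FSST. -/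
def omegaC (σ : ℝ → ℝ) (g x : ℝ → ℂ) (t η : ℝ) : ℂ :=
  adSTFTt σ g x t η / (2 * (π : ℂ) * Complex.I * adSTFT σ g x t η)
  + ((deriv σ t : ℝ) : ℂ) / (2 * (π : ℂ) * Complex.I * (σ t : ℂ))
  + ((deriv σ t / σ t : ℝ) : ℂ) * adSTFT σ (g3w g) x t η /
      (2 * (π : ℂ) * Complex.I * adSTFT σ g x t η)

/-- The (real) phase transformation `ω^{adp}` of the adaptive FSST. -/
def omegaAdp (σ : ℝ → ℝ) (g x : ℝ → ℂ) (t η : ℝ) : ℝ :=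
  (adSTFTt σ g x t η / (2 * (π : ℂ) * Complex.I * adSTFT σ g x t η)).re
  + (deriv σ t / σ t) *
      (adSTFT σ (g3w g) x t η / (2 * (π : ℂ) * Complex.I * adSTFT σ g x t η)).re

/-- The quantity `P₀(t,η)` of the second-order adaptive FSST. -/
def P0 (σ : ℝ → ℝ) (g x : ℝ → ℂ) (t η : ℝ) : ℂ :=
  (deriv (fun η' => adSTFTt σ g x t η' / adSTFT σ g x t η') η
    + ((deriv σ t / σ t : ℝ) : ℂ) *
        deriv (fun η' => adSTFT σ (g3w g) x t η' / adSTFT σ g x t η') η)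
  / deriv (fun η' => adSTFT σ (g1w g) x t η' / adSTFT σ g x t η') η

/-- The complex second-order phase transformation `ω^{adp,2nd,c}`. -/
def omega2C (σ : ℝ → ℝ) (g x : ℝ → ℂ) (t η : ℝ) : ℂ :=
  ((deriv σ t : ℝ) : ℂ) / (2 * (π : ℂ) * Complex.I * (σ t : ℂ))
  + adSTFTt σ g x t η / (2 * (π : ℂ) * Complex.I * adSTFT σ g x t η)
  - adSTFT σ (g1w g) x t η / (2 * (π : ℂ) * Complex.I * adSTFT σ g x t η) * P0 σ g x t η
  + ((deriv σ t / σ t : ℝ) : ℂ) * adSTFT σ (g3w g) x t η /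
      (2 * (π : ℂ) * Complex.I * adSTFT σ g x t η)

/-- The (real) second-order phase transformation `ω^{adp,2nd}`. -/
def omega2 (σ : ℝ → ℝ) (g x : ℝ → ℂ) (t η : ℝ) : ℝ := (omega2C σ g x t η).re

/-- The adaptive FSST `R^{adp,λ}_{x,γ}`. -/
def fsst (σ : ℝ → ℝ) (g x : ℝ → ℂ) (h : ℝ → ℝ) (γ lam t ξ : ℝ) : ℂ :=
  ∫ η in {η : ℝ | γ < ‖adSTFT σ g x t η‖},
    adSTFT σ g x t η * ((lam⁻¹ * h ((ξ - omegaAdp σ g x t η) / lam) : ℝ) : ℂ)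

/-- The second-order adaptive FSST `R^{adp,2nd,λ}_{x,γ₁,γ₂}`. -/
def fsst2 (σ : ℝ → ℝ) (g x : ℝ → ℂ) (h : ℝ → ℝ) (γ₁ γ₂ lam t ξ : ℝ) : ℂ :=
  ∫ η in {η : ℝ | γ₁ < ‖adSTFT σ g x t η‖ ∧
      γ₂ < ‖deriv (fun η' => adSTFT σ (g1w g) x t η' / adSTFT σ g x t η') η‖},
    adSTFT σ g x t η * ((lam⁻¹ * h ((ξ - omega2 σ g x t η) / lam) : ℝ) : ℂ)

/-- The chirp kernel `G^w_ℓ(t,η)` associated with linear phase `a` and chirp rate `b`. -/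
def chirpG (σ : ℝ → ℝ) (w : ℝ → ℂ) (a b : ℝ) (t η : ℝ) : ℂ :=
  ∫ τ : ℝ, e2πi (a * τ + b * τ ^ 2 / 2) * ((σ t : ℂ))⁻¹ * w (τ / σ t) * e2πi (-(η * τ))

/-- The Fourier transform of the chirped window `e^{iπru²} w(u)`. -/
def chirpFT (r : ℝ) (w : ℝ → ℂ) (ξ : ℝ) : ℂ :=
  ∫ u : ℝ, e2πi (r * u ^ 2 / 2) * w u * e2πi (-(ξ * u))

/-- The residual `err^w(t,η) = Ṽ^w_x(t,η) - Σ_ℓ x_ℓ(t) G^w_ℓ(t,η)`. -/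
def errW (σ : ℝ → ℝ) (w : ℝ → ℂ) (K : ℕ) (A φ : Fin K → ℝ → ℝ) (x : ℝ → ℂ)
    (t η : ℝ) : ℂ :=
  adSTFT σ w x t η - ∑ ℓ, (A ℓ t : ℂ) * e2πi (φ ℓ t) *
    chirpG σ w (deriv (φ ℓ) t) (deriv (deriv (φ ℓ)) t) t η

/-- The quantity `Err₁` of the second-order analysis. -/
def Err1 (σ : ℝ → ℝ) (g x : ℝ → ℂ) (K : ℕ) (A φ : Fin K → ℝ → ℝ) (k : Fin K)
    (t η : ℝ) : ℂ :=
  2 * (π : ℂ) * Complex.I *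
      (∑ ℓ ∈ Finset.univ.erase k, (A ℓ t : ℂ) * e2πi (φ ℓ t) *
        ((deriv (φ ℓ) t - deriv (φ k) t : ℝ) : ℂ) *
        chirpG σ g (deriv (φ ℓ) t) (deriv (deriv (φ ℓ)) t) t η)
  + 2 * (π : ℂ) * Complex.I * (σ t : ℂ) *
      (∑ ℓ ∈ Finset.univ.erase k, (A ℓ t : ℂ) * e2πi (φ ℓ t) *
        ((deriv (deriv (φ ℓ)) t - deriv (deriv (φ k)) t : ℝ) : ℂ) *
        chirpG σ (g1w g) (deriv (φ ℓ) t) (deriv (deriv (φ ℓ)) t) t η)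
  + 2 * (π : ℂ) * Complex.I * ((η - deriv (φ k) t : ℝ) : ℂ) * errW σ g K A φ x t η
  - errW σ (deriv g) K A φ x t η / (σ t : ℂ)
  - 2 * (π : ℂ) * Complex.I * ((deriv (deriv (φ k)) t : ℝ) : ℂ) * (σ t : ℂ) *
      errW σ (g1w g) K A φ x t η

/-- The quantity `Err₂` of the second-order analysis. -/
def Err2 (σ : ℝ → ℝ) (g x : ℝ → ℂ) (K : ℕ) (A φ : Fin K → ℝ → ℝ) (k : Fin K)
    (t η : ℝ) : ℂ :=
  4 * (π : ℂ) ^ 2 * (σ t : ℂ) *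
      (∑ ℓ ∈ Finset.univ.erase k, (A ℓ t : ℂ) * e2πi (φ ℓ t) *
        ((deriv (φ ℓ) t - deriv (φ k) t : ℝ) : ℂ) *
        chirpG σ (g1w g) (deriv (φ ℓ) t) (deriv (deriv (φ ℓ)) t) t η)
  + 4 * (π : ℂ) ^ 2 * (σ t : ℂ) ^ 2 *
      (∑ ℓ ∈ Finset.univ.erase k, (A ℓ t : ℂ) * e2πi (φ ℓ t) *
        ((deriv (deriv (φ ℓ)) t - deriv (deriv (φ k)) t : ℝ) : ℂ) *
        chirpG σ (g2w g) (deriv (φ ℓ) t) (deriv (deriv (φ ℓ)) t) t η)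
  + 2 * (π : ℂ) * Complex.I * errW σ g K A φ x t η
  + 4 * (π : ℂ) ^ 2 * ((η - deriv (φ k) t : ℝ) : ℂ) * (σ t : ℂ) * errW σ (g1w g) K A φ x t η
  + 2 * (π : ℂ) * Complex.I * errW σ (g3w g) K A φ x t η
  - 4 * (π : ℂ) ^ 2 * ((deriv (deriv (φ k)) t : ℝ) : ℂ) * (σ t : ℂ) ^ 2 *
      errW σ (g2w g) K A φ x t η

/-- The quantity `Err₃` of the second-order analysis. -/
def Err3 (σ : ℝ → ℝ) (g x : ℝ → ℂ) (K : ℕ) (A φ : Fin K → ℝ → ℝ) (k : Fin K)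
    (t η : ℝ) : ℂ :=
  (adSTFT σ g x t η * Err2 σ g x K A φ k t η
    - adSTFTη σ g x t η * Err1 σ g x K A φ k t η)
  / (adSTFT σ g x t η * adSTFTη σ (g1w g) x t η
    - adSTFT σ (g1w g) x t η * adSTFTη σ g x t η)

/-! ### The exponential `e2πi` -/

lemma norm_e2πi (θ : ℝ) : ‖e2πi θ‖ = 1 := by
  have : e2πi θ = Complex.exp (((2 * π * θ : ℝ) : ℂ) * Complex.I) := by
    unfold e2πi; push_cast; rfl
  rw [this, Complex.norm_exp_ofReal_mul_I]

lemma e2πi_add (a b : ℝ) : e2πi (a + b) = e2πi a * e2πi b := by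
  unfold e2πi; rw [← Complex.exp_add]; push_cast; congr 1; ring

lemma continuous_e2πi : Continuous e2πi := by
  unfold e2πi; fun_prop

lemma hasDerivAt_e2πi {f : ℝ → ℝ} {f' s : ℝ} (hf : HasDerivAt f f' s) :
    HasDerivAt (fun s => e2πi (f s)) (2 * π * Complex.I * f' * e2πi (f s)) s := by
  have h := (((hf.ofReal_comp).const_mul (2 * (π : ℂ))).mul_const Complex.I).cexp
  unfold e2πi
  convert h using 1
  ring

lemma norm_e2πi_sub_le (a b : ℝ) : ‖e2πi a - e2πi b‖ ≤ 2 * π * |a - b| := by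
  have h1 : e2πi a - e2πi b =
      e2πi b * (Complex.exp (Complex.I * ((2 * π * (a - b) : ℝ) : ℂ)) - 1) := by
    have : e2πi a = e2πi b * e2πi (a - b) := by rw [← e2πi_add]; congr 1; ring
    rw [this, mul_sub, mul_one]
    congr 2
    unfold e2πi; push_cast; congr 1; ring
  rw [h1, norm_mul, norm_e2πi, one_mul]
  refine Real.norm_exp_I_mul_ofReal_sub_one_le.trans_eq ?_
  rw [Real.norm_eq_abs, abs_mul, abs_of_pos (by positivity : 0 < 2 * π)]

/-! ### Windows, Fourier transforms and moments -/

lemma ft_eq_fourier (w : ℝ → ℂ) (ξ : ℝ) : ft w ξ = FourierTransform.fourier w ξ := by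
  rw [Real.fourier_eq', ft]
  congr 1; ext u
  rw [smul_eq_mul, mul_comm]
  congr 1
  unfold e2πi; congr 1
  simp only [RCLike.inner_apply, conj_trivial]
  push_cast; ring

lemma coe_derivCLM (g : SchwartzMap ℝ ℂ) :
    ⇑(SchwartzMap.derivCLM ℂ ℂ g) = deriv ⇑g := by
  ext u; simp [SchwartzMap.derivCLM_apply]

lemma ft_deriv (g : SchwartzMap ℝ ℂ) (ξ : ℝ) :
    ft (deriv g) ξ = 2 * π * Complex.I * ξ * ft g ξ := by
  have hd : Integrable (deriv g) := by
    rw [← coe_derivCLM]; exact SchwartzMap.integrable _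
  rw [ft_eq_fourier, ft_eq_fourier, Real.fourier_deriv g.integrable g.differentiable hd]
  simp

lemma norm_ft_le (w : ℝ → ℂ) (ξ : ℝ) : ‖ft w ξ‖ ≤ ∫ u, ‖w u‖ := by
  refine (norm_integral_le_integral_norm _).trans_eq ?_
  simp only [norm_mul, norm_e2πi, mul_one]

lemma integrable_absMom (w : SchwartzMap ℝ ℂ) (n : ℕ) :
    Integrable (fun v : ℝ => |v| ^ n * ‖w v‖) :=
  SchwartzMap.integrable_pow_mul volume w n

lemma absMom_nonneg (w : ℝ → ℂ) (n : ℕ) : 0 ≤ absMom w n :=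
  integral_nonneg fun _ => by positivity

lemma absMom_one_pos (g : SchwartzMap ℝ ℂ) (hg0 : g 0 ≠ 0) : 0 < absMom g 1 := by
  have hi := integrable_absMom g 1
  have hc : Continuous (fun v : ℝ => |v| ^ 1 * ‖g v‖) := by
    have := g.continuous; fun_prop
  refine (integral_pos_iff_support_of_nonneg (fun v => by positivity) hi).2 ?_
  have hev : ∀ᶠ v in 𝓝 (0 : ℝ), g v ≠ 0 := g.continuous.continuousAt.eventually_ne hg0
  -- the integrand vanishes at `0` itself, so a nearby nonzero point is used
  obtain ⟨v, hv, hv0⟩ :=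
    ((hev.filter_mono nhdsWithin_le_nhds).and (self_mem_nhdsWithin : {(0 : ℝ)}ᶜ ∈ 𝓝[≠] 0)).exists
  refine (hc.isOpen_support).measure_pos volume ⟨v, ?_⟩
  simp only [Function.mem_support]
  have : v ≠ 0 := hv0
  positivity

/-- The STFT after the change of variables `τ = σ(t) v`, which freezes the window. -/
lemma adSTFT_eq (σ : ℝ → ℝ) (w x : ℝ → ℂ) (t η : ℝ) (h : 0 < σ t) :
    adSTFT σ w x t η = ∫ v : ℝ, x (t + σ t * v) * w v * e2πi (-(η * (σ t * v))) := by
  have hne : σ t ≠ 0 := h.ne'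
  have h1 := Measure.integral_comp_div
    (fun v : ℝ => x (t + σ t * v) * ((σ t : ℂ))⁻¹ * w v * e2πi (-(η * (σ t * v)))) (σ t)
  have h2 : ∀ τ : ℝ, σ t * (τ / σ t) = τ := fun τ => by field_simp
  simp only [h2] at h1
  rw [adSTFT, h1, abs_of_pos h, ← integral_smul]
  congr 1; ext v
  have : (σ t : ℂ) ≠ 0 := by exact_mod_cast hne
  rw [Complex.real_smul]
  field_simp

/-! ### First-order approximation of a component -/

/-- Taylor's bound for nonnegative increments. -/
lemma taylor_aux {f : ℝ → ℝ} (hf : ContDiff ℝ 2 f) {ε : ℝ}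
    (hb : ∀ s, |deriv (deriv f) s| ≤ ε) (t : ℝ) {h : ℝ} (hh : 0 ≤ h) :
    |f (t + h) - f t - deriv f t * h| ≤ ε / 2 * h ^ 2 := by
  have hd : Differentiable ℝ f := hf.differentiable (by norm_num)
  have hf1 : ContDiff ℝ 1 (deriv f) := by
    have : ContDiff ℝ (1 + 1) f := by norm_num; exact hf
    exact (contDiff_succ_iff_deriv.1 this).2.2
  have hd' : Differentiable ℝ (deriv f) := hf1.differentiable (by norm_num)
  have hder : ∀ s, HasDerivAt (fun h => f (t + h) - f t - deriv f t * h)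
      (deriv f (t + s) - deriv f t) s := fun s => by
    have h1 : HasDerivAt (fun h => f (t + h)) (deriv f (t + s)) s :=
      (hd (t + s)).hasDerivAt.comp_const_add t s
    simpa using (h1.sub_const (f t)).fun_sub ((hasDerivAt_id s).const_mul (deriv f t))
  have key := image_norm_le_of_norm_deriv_right_le_deriv_boundary
    (f := fun h => f (t + h) - f t - deriv f t * h) (a := 0) (b := h)
    (f' := fun s => deriv f (t + s) - deriv f t)
    (fun s _ => (hder s).continuousAt.continuousWithinAt)
    (fun s _ => (hder s).hasDerivWithinAt)
    (B := fun s => ε / 2 * s ^ 2) (B' := fun s => ε * s) (by simp)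
    (fun s => ((hasDerivAt_pow 2 s).const_mul (ε / 2)).congr_deriv (by push_cast; ring))
    (fun s hs => by
      have := Convex.norm_image_sub_le_of_norm_deriv_le (f := deriv f) (s := Set.univ)
        (x := t) (y := t + s) (C := ε) (fun _ _ => hd' _) (fun u _ => hb u) convex_univ
        trivial trivial
      simpa [abs_of_nonneg hs.1] using this)
    ⟨hh, le_rfl⟩
  simpa using key

lemma taylor_bound {f : ℝ → ℝ} (hf : ContDiff ℝ 2 f) {ε : ℝ}
    (hb : ∀ s, |deriv (deriv f) s| ≤ ε) (t h : ℝ) :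
    |f (t + h) - f t - deriv f t * h| ≤ ε / 2 * h ^ 2 := by
  rcases le_total 0 h with hh | hh
  · exact taylor_aux hf hb t hh
  · have hneg : deriv (fun s => f (-s)) = fun s => -deriv f (-s) := by
      ext s; exact deriv_comp_neg f s
    have hneg2 : deriv (deriv fun s => f (-s)) = fun s => deriv (deriv f) (-s) := by
      rw [hneg]; ext s
      have := deriv_comp_neg (deriv f) s
      simp [deriv.fun_neg, this]
    have := taylor_aux (f := fun s => f (-s)) (hf.comp contDiff_neg) (ε := ε)
      (fun s => by rw [hneg2]; exact hb _) (-t) (h := -h) (by linarith)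
    rw [hneg] at this
    have e : -(-t + -h) = t + h := by ring
    simpa only [neg_neg, e, neg_mul_neg, neg_sq] using this

/-- Near `t`, a component is a pure tone of frequency `φ' t` up to an error controlled by the
variation of the amplitude and by the curvature of the phase. -/
lemma component_bound {A φ : ℝ → ℝ} {ε₁ ε₂ : ℝ} (hA : ContDiff ℝ 1 A) (hφ : ContDiff ℝ 2 φ)
    (hA' : ∀ s, |deriv A s| ≤ ε₁) (hφ'' : ∀ s, |deriv (deriv φ) s| ≤ ε₂)
    (hpos : ∀ s, 0 < A s) (t h : ℝ) :
    ‖(A (t + h) : ℂ) * e2πi (φ (t + h)) - A t * e2πi (φ t) * e2πi (deriv φ t * h)‖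
      ≤ ε₁ * |h| + π * ε₂ * A t * |h| ^ 2 := by
  have hA1 : |A (t + h) - A t| ≤ ε₁ * |h| := by
    have := Convex.norm_image_sub_le_of_norm_deriv_le (f := A) (s := Set.univ)
      (x := t) (y := t + h) (C := ε₁) (fun _ _ => hA.differentiable (by norm_num) _)
      (fun u _ => hA' u) convex_univ trivial trivial
    simpa using this
  have hφ1 := taylor_bound hφ hφ'' t h
  have hsplit : (A (t + h) : ℂ) * e2πi (φ (t + h)) - A t * e2πi (φ t) * e2πi (deriv φ t * h)
      = ((A (t + h) - A t : ℝ) : ℂ) * e2πi (φ (t + h))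
        + (A t : ℂ) * (e2πi (φ (t + h)) - e2πi (φ t + deriv φ t * h)) := by
    rw [e2πi_add]; push_cast; ring
  rw [hsplit]
  refine (norm_add_le _ _).trans (add_le_add ?_ ?_)
  · rw [norm_mul, norm_e2πi, mul_one, Complex.norm_real]; exact hA1
  · rw [norm_mul, Complex.norm_real, Real.norm_of_nonneg (hpos t).le]
    have h2 := norm_e2πi_sub_le (φ (t + h)) (φ t + deriv φ t * h)
    rw [← sub_sub] at h2
    calc A t * ‖e2πi (φ (t + h)) - e2πi (φ t + deriv φ t * h)‖
        ≤ A t * (2 * π * (ε₂ / 2 * h ^ 2)) := by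
          gcongr
          · exact (hpos t).le
          · exact h2.trans (by gcongr)
      _ = π * ε₂ * A t * |h| ^ 2 := by rw [sq_abs]; ring

/-! ### The STFT as a superposition of Fourier transforms of the window -/

/-- The STFT is, up to an explicit error, the STFT of the superposition of the tones tangent to
the components at time `t`. -/
lemma stft_approx {K : ℕ} {A φ : Fin K → ℝ → ℝ} {ε₁ ε₂ : ℝ}
    (hA1 : ∀ k, ContDiff ℝ 1 (A k)) (hφ2 : ∀ k, ContDiff ℝ 2 (φ k))
    (hApos : ∀ k s, 0 < A k s) (hA' : ∀ k s, |deriv (A k) s| ≤ ε₁)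
    (hφ'' : ∀ k s, |deriv (deriv (φ k)) s| ≤ ε₂) (w : SchwartzMap ℝ ℂ)
    {σ : ℝ → ℝ} {x : ℝ → ℂ} (hx : ∀ s, x s = ∑ k, (A k s : ℂ) * e2πi (φ k s))
    (hxb : ∃ C, ∀ s, ‖x s‖ ≤ C) (t η : ℝ) (hσ : 0 < σ t) :
    ‖adSTFT σ w x t η -
        ∑ ℓ, (A ℓ t : ℂ) * e2πi (φ ℓ t) * ft w (σ t * (η - deriv (φ ℓ) t))‖ ≤
      σ t * (K * ε₁ * absMom w 1 + π * ε₂ * absMom w 2 * σ t * ∑ k, A k t) := by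
  have hwc := w.continuous
  have hec := continuous_e2πi
  have hxc : Continuous x := by
    rw [show x = fun s => ∑ k, (A k s : ℂ) * e2πi (φ k s) from funext hx]
    refine continuous_finsetSum _ fun k _ => ?_
    have h1 := (hA1 k).continuous
    have h2 := (hφ2 k).continuous
    fun_prop
  obtain ⟨C, hC⟩ := hxb
  have hint : Integrable (fun v : ℝ => x (t + σ t * v) * w v * e2πi (-(η * (σ t * v)))) := by
    refine (w.integrable.norm.const_mul C).mono' (by fun_prop) (ae_of_all _ fun v => ?_)
    rw [norm_mul, norm_mul, norm_e2πi, mul_one]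
    gcongr
    exact hC _
  have hint' : ∀ ℓ, Integrable (fun v : ℝ => (A ℓ t : ℂ) * e2πi (φ ℓ t) *
      e2πi (deriv (φ ℓ) t * (σ t * v)) * w v * e2πi (-(η * (σ t * v)))) := fun ℓ => by
    refine (w.integrable.norm.const_mul (A ℓ t)).mono' (by fun_prop) (ae_of_all _ fun v => ?_)
    simp only [norm_mul, norm_e2πi, mul_one, Complex.norm_real,
      Real.norm_of_nonneg (hApos ℓ t).le, le_refl]
  have hft : ∀ ℓ, (A ℓ t : ℂ) * e2πi (φ ℓ t) * ft w (σ t * (η - deriv (φ ℓ) t)) =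
      ∫ v : ℝ, (A ℓ t : ℂ) * e2πi (φ ℓ t) *
      e2πi (deriv (φ ℓ) t * (σ t * v)) * w v * e2πi (-(η * (σ t * v))) := fun ℓ => by
    rw [ft, ← integral_const_mul]
    congr 1; ext v
    have : e2πi (-(σ t * (η - deriv (φ ℓ) t) * v)) =
        e2πi (deriv (φ ℓ) t * (σ t * v)) * e2πi (-(η * (σ t * v))) := by
      rw [← e2πi_add]; congr 1; ring
    rw [this]; ring
  rw [adSTFT_eq σ w x t η hσ, Finset.sum_congr rfl fun ℓ _ => hft ℓ,
    ← integral_finsetSum _ fun ℓ _ => hint' ℓ,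
    ← integral_sub hint (integrable_finsetSum _ fun ℓ _ => hint' ℓ)]
  have hm1 := (integrable_absMom w 1).const_mul (K * ε₁ * σ t)
  have hm2 := (integrable_absMom w 2).const_mul (π * ε₂ * σ t ^ 2 * ∑ k, A k t)
  refine (norm_integral_le_of_norm_le (hm1.add hm2) (ae_of_all _ fun v => ?_)).trans_eq ?_
  · have hfac : x (t + σ t * v) * w v * e2πi (-(η * (σ t * v))) -
        ∑ ℓ, (A ℓ t : ℂ) * e2πi (φ ℓ t) *
          e2πi (deriv (φ ℓ) t * (σ t * v)) * w v * e2πi (-(η * (σ t * v))) =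
        (∑ ℓ, ((A ℓ (t + σ t * v) : ℂ) * e2πi (φ ℓ (t + σ t * v)) -
          A ℓ t * e2πi (φ ℓ t) * e2πi (deriv (φ ℓ) t * (σ t * v)))) *
          w v * e2πi (-(η * (σ t * v))) := by
      rw [hx, Finset.sum_sub_distrib, sub_mul, sub_mul]
      simp only [Finset.sum_mul]
    rw [hfac, norm_mul, norm_mul, norm_e2πi, mul_one]
    have hsum : ‖∑ ℓ, ((A ℓ (t + σ t * v) : ℂ) * e2πi (φ ℓ (t + σ t * v)) -
          A ℓ t * e2πi (φ ℓ t) * e2πi (deriv (φ ℓ) t * (σ t * v)))‖ ≤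
        ∑ ℓ, (ε₁ * |σ t * v| + π * ε₂ * A ℓ t * |σ t * v| ^ 2) :=
      norm_sum_le_of_le _ fun ℓ _ => component_bound (hA1 ℓ) (hφ2 ℓ) (hA' ℓ) (hφ'' ℓ)
        (hApos ℓ) t (σ t * v)
    refine (mul_le_mul_of_nonneg_right hsum (norm_nonneg _)).trans_eq ?_
    rw [Finset.sum_add_distrib, ← Finset.sum_mul, ← Finset.sum_mul, ← Finset.mul_sum, abs_mul,
      abs_of_pos hσ]
    simp only [Finset.sum_const, Finset.card_univ, Fintype.card_fin, nsmul_eq_mul, Pi.add_apply]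
    ring
  · rw [integral_add' hm1 hm2, integral_const_mul, integral_const_mul]
    unfold absMom
    ring

/-! ### The time derivative of the adaptive STFT -/

/-- Differentiation of the STFT of a `C¹` signal, bounded together with its derivative.
In the variable `τ = σ(s) v` only the signal and the exponential depend on `s`, and an
integration by parts moves the derivative of the signal onto the window. -/
lemma hasDerivAt_adSTFT (g : SchwartzMap ℝ ℂ) {σ : ℝ → ℝ} (hσ : ContDiff ℝ 1 σ)
    (hσpos : ∀ s, 0 < σ s) {x x' : ℝ → ℂ} (hx : ∀ s, HasDerivAt x (x' s) s)
    (hx'c : Continuous x') {C C' : ℝ} (hC : ∀ s, ‖x s‖ ≤ C) (hC' : ∀ s, ‖x' s‖ ≤ C')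
    (t η : ℝ) :
    HasDerivAt (fun s => adSTFT σ g x s η)
      ((2 * π * Complex.I * η - (deriv σ t / σ t : ℝ)) * adSTFT σ g x t η
        - adSTFT σ (deriv g) x t η / σ t
        - (deriv σ t / σ t : ℝ) * adSTFT σ (g3w g) x t η) t := by
  have hgc := g.continuous
  have hec := continuous_e2πi
  have hxc : Continuous x := continuous_iff_continuousAt.2 fun s => (hx s).continuousAt
  have hσd : Differentiable ℝ σ := hσ.differentiable (by norm_num)
  have hσ' : Continuous (deriv σ) := hσ.continuous_deriv (by norm_num)
  have hg'c : Continuous (deriv g) := by rw [← coe_derivCLM]; exact SchwartzMap.continuous _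
  have hσ0 : (σ t : ℂ) ≠ 0 := by exact_mod_cast (hσpos t).ne'
  have hm0 : Integrable (fun v => ‖g v‖) := g.integrable.norm
  have hm1 : Integrable (fun v : ℝ => |v| * ‖g v‖) := by simpa using integrable_absMom g 1
  have hd0 : Integrable (fun v => ‖deriv g v‖) := by
    rw [← coe_derivCLM]; exact (SchwartzMap.integrable _).norm
  have hd1 : Integrable (fun v : ℝ => |v| * ‖deriv g v‖) := by
    have := integrable_absMom (SchwartzMap.derivCLM ℂ ℂ g) 1
    rw [coe_derivCLM] at this; simpa using this
  have hC0 : 0 ≤ C := (norm_nonneg _).trans (hC 0)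
  have hC0' : 0 ≤ C' := (norm_nonneg _).trans (hC' 0)
  set D := |deriv σ t| + 1 with hD
  have hD0 : 0 ≤ D := by positivity
  let F' : ℝ → ℝ → ℂ := fun s v =>
    ((((1 + deriv σ s * v : ℝ) : ℂ) * x' (s + σ s * v)) * g v) * e2πi (-(η * (σ s * v)))
      + x (s + σ s * v) * g v *
        (2 * π * Complex.I * ((-(η * (deriv σ s * v)) : ℝ) : ℂ) * e2πi (-(η * (σ s * v))))
  have hU : {s | |deriv σ s| < D} ∈ 𝓝 t :=
    (isOpen_lt (by fun_prop) continuous_const).mem_nhds (by simp [hD])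
  have hlin : ∀ s v : ℝ, HasDerivAt (fun s => s + σ s * v) (1 + deriv σ s * v) s := fun s v =>
    (hasDerivAt_id s).add ((hσd s).hasDerivAt.mul_const v)
  have main := hasDerivAt_integral_of_dominated_loc_of_deriv_le (μ := volume)
    (F := fun s v => x (s + σ s * v) * g v * e2πi (-(η * (σ s * v)))) (F' := F') (x₀ := t)
    (bound := fun v => C' * ‖g v‖ + (C' * D + C * (2 * π * (|η| * D))) * (|v| * ‖g v‖))
    hU (Eventually.of_forall fun s => by fun_prop)
    (by
      refine (hm0.const_mul C).mono' (by fun_prop) (ae_of_all _ fun v => ?_)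
      rw [norm_mul, norm_mul, norm_e2πi, mul_one]
      gcongr
      exact hC _)
    (by simp only [F']; fun_prop)
    (ae_of_all _ fun v s hs => by
      have hs' : |deriv σ s| ≤ D := le_of_lt hs
      have h1 : |1 + deriv σ s * v| ≤ 1 + D * |v| := by
        refine (abs_add_le _ _).trans ?_
        rw [abs_one, abs_mul]; gcongr
      refine (norm_add_le _ _).trans ?_
      simp only [norm_mul, norm_e2πi, mul_one, Complex.norm_real, Complex.norm_I, norm_neg,
        Real.norm_eq_abs, Complex.norm_ofNat, abs_of_pos Real.pi_pos]
      calc |1 + deriv σ s * v| * ‖x' (s + σ s * v)‖ * ‖g v‖ +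
            ‖x (s + σ s * v)‖ * ‖g v‖ * (2 * π * (|η| * (|deriv σ s| * |v|)))
          ≤ (1 + D * |v|) * C' * ‖g v‖ + C * ‖g v‖ * (2 * π * (|η| * (D * |v|))) := by
            gcongr
            · exact hC' _
            · exact hC _
        _ = _ := by ring)
    ((hm0.const_mul _).add (hm1.const_mul _))
    (ae_of_all _ fun v s _ => by
      have e1 : HasDerivAt (fun s => x (s + σ s * v))
          (((1 + deriv σ s * v : ℝ) : ℂ) * x' (s + σ s * v)) s := by
        have := (hx (s + σ s * v)).scomp s (hlin s v)
        simpa [Complex.real_smul, Function.comp_def] using this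
      have e2 : HasDerivAt (fun s => -(η * (σ s * v))) (-(η * (deriv σ s * v))) s :=
        (((hσd s).hasDerivAt.mul_const v).const_mul η).neg
      exact (e1.mul_const (g v)).mul (hasDerivAt_e2πi e2))
  have hV : (fun s => adSTFT σ g x s η) =
      fun s => ∫ v, x (s + σ s * v) * g v * e2πi (-(η * (σ s * v))) :=
    funext fun s => adSTFT_eq σ g x s η (hσpos s)
  rw [hV]
  refine main.2.congr_deriv (Eq.symm ?_)
  rw [adSTFT_eq σ _ x t η (hσpos t), adSTFT_eq σ _ x t η (hσpos t),
    adSTFT_eq σ _ x t η (hσpos t)]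
  -- `x' (t + σ v)` is `1 / σ` times the derivative of `x (t + σ v)` in `v`
  let u : ℝ → ℂ := fun v => x (t + σ t * v)
  let u' : ℝ → ℂ := fun v => σ t * x' (t + σ t * v)
  let q : ℝ → ℂ := fun v =>
    ((1 + deriv σ t * v : ℝ) : ℂ) * g v * e2πi (-(η * (σ t * v)))
  let q' : ℝ → ℂ := fun v =>
    (((deriv σ t : ℝ) : ℂ) * g v + ((1 + deriv σ t * v : ℝ) : ℂ) * deriv g v) *
      e2πi (-(η * (σ t * v)))
    + ((1 + deriv σ t * v : ℝ) : ℂ) * g v *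
      (2 * π * Complex.I * ((-(η * σ t) : ℝ) : ℂ) * e2πi (-(η * (σ t * v))))
  have hu : ∀ v, HasDerivAt u (u' v) v := fun v => by
    have hl : HasDerivAt (fun v => t + σ t * v) (σ t) v := by
      simpa using ((hasDerivAt_id v).const_mul (σ t)).const_add t
    have := (hx (t + σ t * v)).scomp v hl
    simpa [Complex.real_smul, Function.comp_def] using this
  have hq : ∀ v, HasDerivAt q (q' v) v := fun v => by
    have e0 : HasDerivAt (fun v => 1 + deriv σ t * v) (deriv σ t) v := by
      simpa using ((hasDerivAt_id v).const_mul (deriv σ t)).const_add 1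
    have e1 := e0.ofReal_comp.mul (g.differentiable v).hasDerivAt
    have e2 : HasDerivAt (fun v => -(η * (σ t * v))) (-(η * σ t)) v := by
      simpa using (((hasDerivAt_id v).const_mul (σ t)).const_mul η).fun_neg
    exact e1.mul (hasDerivAt_e2πi e2)
  -- integrability of the pieces into which the products of `u`, `q` and their derivatives split
  have i0 : Integrable (fun v : ℝ => x (t + σ t * v) * g v * e2πi (-(η * (σ t * v)))) := by
    refine (hm0.const_mul C).mono' (by fun_prop) (ae_of_all _ fun v => ?_)
    rw [norm_mul, norm_mul, norm_e2πi, mul_one]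
    gcongr
    exact hC _
  have i0' : Integrable (fun v : ℝ => x' (t + σ t * v) * g v * e2πi (-(η * (σ t * v)))) := by
    refine (hm0.const_mul C').mono' (by fun_prop) (ae_of_all _ fun v => ?_)
    rw [norm_mul, norm_mul, norm_e2πi, mul_one]
    gcongr
    exact hC' _
  have i1 : Integrable
      (fun v : ℝ => x (t + σ t * v) * ((v : ℂ) * g v) * e2πi (-(η * (σ t * v)))) := by
    refine (hm1.const_mul C).mono' (by fun_prop) (ae_of_all _ fun v => ?_)
    rw [norm_mul, norm_mul, norm_mul, norm_e2πi, mul_one, Complex.norm_real, Real.norm_eq_abs]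
    gcongr
    exact hC _
  have i1' : Integrable
      (fun v : ℝ => x' (t + σ t * v) * ((v : ℂ) * g v) * e2πi (-(η * (σ t * v)))) := by
    refine (hm1.const_mul C').mono' (by fun_prop) (ae_of_all _ fun v => ?_)
    rw [norm_mul, norm_mul, norm_mul, norm_e2πi, mul_one, Complex.norm_real, Real.norm_eq_abs]
    gcongr
    exact hC' _
  have j0 : Integrable
      (fun v : ℝ => x (t + σ t * v) * deriv g v * e2πi (-(η * (σ t * v)))) := by
    refine (hd0.const_mul C).mono' (by fun_prop) (ae_of_all _ fun v => ?_)
    rw [norm_mul, norm_mul, norm_e2πi, mul_one]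
    gcongr
    exact hC _
  have j1 : Integrable
      (fun v : ℝ => x (t + σ t * v) * g3w g v * e2πi (-(η * (σ t * v)))) := by
    unfold g3w
    refine (hd1.const_mul C).mono' (by fun_prop) (ae_of_all _ fun v => ?_)
    rw [norm_mul, norm_mul, norm_mul, norm_e2πi, mul_one, Complex.norm_real, Real.norm_eq_abs]
    gcongr
    exact hC _
  have huq' : ∀ v, u v * q' v =
      (((deriv σ t : ℝ) : ℂ) - 2 * π * Complex.I * η * σ t) *
          (x (t + σ t * v) * g v * e2πi (-(η * (σ t * v))))
        + x (t + σ t * v) * deriv g v * e2πi (-(η * (σ t * v)))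
        + ((deriv σ t : ℝ) : ℂ) * (x (t + σ t * v) * g3w g v * e2πi (-(η * (σ t * v))))
        - 2 * π * Complex.I * η * (σ t : ℂ) * ((deriv σ t : ℝ) : ℂ) *
          (x (t + σ t * v) * ((v : ℂ) * g v) * e2πi (-(η * (σ t * v)))) := fun v => by
    simp only [u, q', g3w]; push_cast; ring
  have hu'q : ∀ v, u' v * q v =
      σ t * (x' (t + σ t * v) * g v * e2πi (-(η * (σ t * v))))
        + (σ t : ℂ) * ((deriv σ t : ℝ) : ℂ) *
          (x' (t + σ t * v) * ((v : ℂ) * g v) * e2πi (-(η * (σ t * v)))) := fun v => by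
    simp only [u', q]; push_cast; ring
  have huq : ∀ v, u v * q v =
      x (t + σ t * v) * g v * e2πi (-(η * (σ t * v)))
        + ((deriv σ t : ℝ) : ℂ) *
          (x (t + σ t * v) * ((v : ℂ) * g v) * e2πi (-(η * (σ t * v)))) := fun v => by
    simp only [u, q]; push_cast; ring
  have k1 := i0.const_mul (((deriv σ t : ℝ) : ℂ) - 2 * π * Complex.I * η * σ t)
  have k2 := j1.const_mul ((deriv σ t : ℝ) : ℂ)
  have k3 := i1.const_mul (2 * π * Complex.I * η * (σ t : ℂ) * ((deriv σ t : ℝ) : ℂ))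
  have parts := integral_mul_deriv_eq_deriv_mul_of_integrable (fun v _ => hu v)
    (fun v _ => hq v)
    (((k1.add j0).add k2).sub k3 |>.congr (ae_of_all _ fun v => (huq' v).symm))
    ((i0'.const_mul (σ t : ℂ)).add (i1'.const_mul ((σ t : ℂ) * ((deriv σ t : ℝ) : ℂ) : ℂ)) |>.congr
      (ae_of_all _ fun v => (hu'q v).symm))
    (i0.add (i1.const_mul ((deriv σ t : ℝ) : ℂ)) |>.congr (ae_of_all _ fun v => (huq v).symm))
  have hF' : ∀ v, F' t v = (σ t : ℂ)⁻¹ * (u' v * q v) -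
      2 * π * Complex.I * η * ((deriv σ t : ℝ) : ℂ) *
        (x (t + σ t * v) * ((v : ℂ) * g v) * e2πi (-(η * (σ t * v)))) := fun v => by
    simp only [F', u', q]; push_cast; field_simp; ring
  have hiu'q : Integrable (fun v => u' v * q v) :=
    (i0'.const_mul (σ t : ℂ)).add (i1'.const_mul ((σ t : ℂ) * ((deriv σ t : ℝ) : ℂ) : ℂ)) |>.congr
      (ae_of_all _ fun v => (hu'q v).symm)
  have hIF : ∫ v, F' t v = (σ t : ℂ)⁻¹ * (∫ v, u' v * q v) -
      2 * π * Complex.I * η * ((deriv σ t : ℝ) : ℂ) *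
        ∫ v, (x (t + σ t * v) * ((v : ℂ) * g v) * e2πi (-(η * (σ t * v)))) := by
    simp only [hF']
    rw [integral_sub (hiu'q.const_mul _) (i1.const_mul _), integral_const_mul,
      integral_const_mul]
  have hIuq' : ∫ v, u v * q' v =
      (((deriv σ t : ℝ) : ℂ) - 2 * π * Complex.I * η * σ t) *
          (∫ v, x (t + σ t * v) * g v * e2πi (-(η * (σ t * v))))
        + (∫ v, x (t + σ t * v) * deriv g v * e2πi (-(η * (σ t * v))))
        + ((deriv σ t : ℝ) : ℂ) * (∫ v, x (t + σ t * v) * g3w g v * e2πi (-(η * (σ t * v))))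
        - 2 * π * Complex.I * η * (σ t : ℂ) * ((deriv σ t : ℝ) : ℂ) *
          ∫ v, (x (t + σ t * v) * ((v : ℂ) * g v) * e2πi (-(η * (σ t * v)))) := by
    have e := integral_sub' ((k1.add j0).add k2) k3
    rw [integral_add' (k1.add j0) k2, integral_add' k1 j0, integral_const_mul,
      integral_const_mul, integral_const_mul] at e
    simp only [huq']
    exact e
  rw [hIF, eq_neg_iff_add_eq_zero.1 parts |> eq_neg_of_add_eq_zero_right, hIuq']
  generalize ∫ v, x (t + σ t * v) * g v * e2πi (-(η * (σ t * v))) = V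
  generalize ∫ v, x (t + σ t * v) * deriv g v * e2πi (-(η * (σ t * v))) = V'
  generalize ∫ v, x (t + σ t * v) * g3w g v * e2πi (-(η * (σ t * v))) = V₃
  generalize ∫ v : ℝ, x (t + σ t * v) * ((v : ℂ) * g v) * e2πi (-(η * (σ t * v))) = V₁
  push_cast
  field_simp
  ring

/-! ### The estimate of the phase transformation -/

/-- The derivative formula for the STFT cancels every term of `∂ₜV` containing `σ'`, except a
purely imaginary one, which the real part removes. -/
lemma omegaAdp_eq (g : SchwartzMap ℝ ℂ) {σ : ℝ → ℝ} {x : ℝ → ℂ} {t η : ℝ} (hσ : 0 < σ t)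
    (hd : HasDerivAt (fun s => adSTFT σ g x s η)
      ((2 * π * Complex.I * η - (deriv σ t / σ t : ℝ)) * adSTFT σ g x t η
        - adSTFT σ (deriv g) x t η / σ t
        - (deriv σ t / σ t : ℝ) * adSTFT σ (g3w g) x t η) t)
    (hV : adSTFT σ g x t η ≠ 0) (c : ℝ) :
    omegaAdp σ g x t η - c =
      ((2 * π * Complex.I * (η - c : ℝ) * adSTFT σ g x t η - adSTFT σ (deriv g) x t η / σ t) /
        (2 * π * Complex.I * adSTFT σ g x t η)).re := by
  rw [omegaAdp, adSTFTt, hd.deriv]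
  generalize adSTFT σ g x t η = V at *
  generalize adSTFT σ (deriv g) x t η = V'
  generalize adSTFT σ (g3w g) x t η = V₃
  generalize deriv σ t / σ t = r
  have hπ : (π : ℂ) ≠ 0 := by exact_mod_cast Real.pi_ne_zero
  have hσ0 : (σ t : ℂ) ≠ 0 := by exact_mod_cast hσ.ne'
  have hI := Complex.I_ne_zero
  have key : ((2 * π * Complex.I * η - (r : ℝ)) * V - V' / σ t - (r : ℝ) * V₃) /
        (2 * π * Complex.I * V) + (r : ℂ) * (V₃ / (2 * π * Complex.I * V)) - (c : ℂ) =
      (2 * π * Complex.I * (η - c : ℝ) * V - V' / σ t) / (2 * π * Complex.I * V)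
        + ((r / (2 * π) : ℝ) : ℂ) * Complex.I := by
    have hI2 : Complex.I ^ 2 = -1 := Complex.I_sq
    push_cast
    field_simp
    linear_combination (-(r : ℂ) * V * σ t) * hI2
  have := congrArg Complex.re key
  simpa only [Complex.add_re, Complex.sub_re, Complex.re_ofReal_mul, Complex.ofReal_re,
    Complex.I_re, mul_zero, add_zero] using this

theorem statement2
    (K : ℕ) (hK : 0 < K)
    (A φ : Fin K → ℝ → ℝ) (ε₁ ε₂ : ℝ) (hε₁ : 0 < ε₁) (hε₂pos : 0 < ε₂)
    (hA1 : ∀ k, ContDiff ℝ 1 (A k))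
    (hAbdd : ∀ k, ∃ C, ∀ s, |A k s| ≤ C)
    (hφ2 : ∀ k, ContDiff ℝ 2 (φ k))
    (hApos : ∀ k s, 0 < A k s)
    (hφ'bd : ∀ k, ∃ c C : ℝ, 0 < c ∧ (∀ s, c ≤ deriv (φ k) s) ∧ ∀ s, deriv (φ k) s ≤ C)
    (hA' : ∀ k s, |deriv (A k) s| ≤ ε₁)
    (hφ'' : ∀ k s, |deriv (deriv (φ k)) s| ≤ ε₂)
    (hsep : ∃ d, 0 < d ∧ ∀ (j : ℕ) (hj : j + 1 < K) (s : ℝ),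
      d ≤ deriv (φ ⟨j + 1, hj⟩) s - deriv (φ ⟨j, Nat.lt_of_succ_lt hj⟩) s)
    (g : SchwartzMap ℝ ℂ) (hg0 : g 0 ≠ 0)
    (hghat_even : ∀ ξ, ‖ft (⇑g) (-ξ)‖ = ‖ft (⇑g) ξ‖)
    (hghat_dec : AntitoneOn (fun ξ => ‖ft (⇑g) ξ‖) (Set.Ici 0))
    (σ : ℝ → ℝ) (hσ : ContDiff ℝ 1 σ) (hσpos : ∀ s, 0 < σ s)
    (x : ℝ → ℂ) (hx : ∀ s, x s = ∑ k, (A k s : ℂ) * e2πi (φ k s))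
    (τ₀ α : ℝ) (hτ₀ : 0 < τ₀) (hτ₀1 : τ₀ < 1) (hαpos : 0 < α) (hαsol : ‖ft (⇑g) α‖ = τ₀)
    (Λ₀ Λt₀ : ℝ → ℝ)
    (hΛ₀ : ∀ s, Λ₀ s = K * ε₁ * absMom (⇑g) 1 + π * ε₂ * absMom (⇑g) 2 * σ s * ∑ k, A k s)
    (hΛt₀ : ∀ s, Λt₀ s = K * ε₁ * absMom (deriv (⇑g)) 1 +
      π * ε₂ * absMom (deriv (⇑g)) 2 * σ s * ∑ k, A k s)
    (t εtilde₁ : ℝ)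
    (hεt₁ : σ t * Λ₀ t + τ₀ * ∑ k, A k t ≤ εtilde₁)
    (bd₁ : ℝ)
    (hbd₁ : bd₁ = (1 / εtilde₁) * (α * Λ₀ t + Λt₀ t / (2 * π))
      + (1 / εtilde₁) * ⨆ k : Fin K,
          ∑ ℓ ∈ Finset.univ.erase k, A ℓ t * |deriv (φ ℓ) t - deriv (φ k) t| *
            sSup ((fun u => ‖ft (⇑g) (u + σ t * (deriv (φ k) t - deriv (φ ℓ) t))‖) ''
              {u : ℝ | |u| < α})) :
    ∀ (η : ℝ) (k : Fin K), εtilde₁ < ‖adSTFT σ (⇑g) x t η‖ →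
      |η - deriv (φ k) t| < α / σ t →
      |omegaAdp σ (⇑g) x t η - deriv (φ k) t| < bd₁ := by
  intro η k hV hη
  have hσt := hσpos t
  have hσ0 : (σ t : ℂ) ≠ 0 := by exact_mod_cast hσt.ne'
  choose C hC using hAbdd
  choose c M hc hcM hM using hφ'bd
  have hC0 : ∀ k, 0 ≤ C k := fun k => (abs_nonneg _).trans (hC k 0)
  have hxb : ∀ s, ‖x s‖ ≤ ∑ k, C k := fun s => by
    rw [hx]
    refine norm_sum_le_of_le _ fun k _ => ?_
    rw [norm_mul, norm_e2πi, mul_one, Complex.norm_real]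
    exact hC k s
  let x' : ℝ → ℂ := fun s => ∑ k, (((deriv (A k) s : ℝ) : ℂ) * e2πi (φ k s)
    + A k s * (2 * π * Complex.I * ((deriv (φ k) s : ℝ) : ℂ) * e2πi (φ k s)))
  have hxd : ∀ s, HasDerivAt x (x' s) s := fun s => by
    rw [show x = fun s => ∑ k, (A k s : ℂ) * e2πi (φ k s) from funext hx]
    refine HasDerivAt.fun_sum fun k _ => ?_
    have h1 := ((hA1 k).differentiable (by norm_num) s).hasDerivAt
    have h2 := ((hφ2 k).differentiable (by norm_num) s).hasDerivAt
    exact h1.ofReal_comp.mul (hasDerivAt_e2πi h2)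
  have hx'c : Continuous x' := by
    refine continuous_finsetSum _ fun k _ => ?_
    have h1 := (hA1 k).continuous
    have h2 := (hφ2 k).continuous
    have h3 := (hA1 k).continuous_deriv (by norm_num)
    have h4 := (hφ2 k).continuous_deriv (by norm_num)
    have h5 := continuous_e2πi
    fun_prop
  have hx'b : ∀ s, ‖x' s‖ ≤ ∑ k, (ε₁ + C k * (2 * π * M k)) := fun s => by
    refine norm_sum_le_of_le _ fun k _ => (norm_add_le _ _).trans ?_
    simp only [norm_mul, norm_e2πi, mul_one, Complex.norm_real, Complex.norm_I,
      Complex.norm_ofNat, Real.norm_eq_abs, abs_of_pos Real.pi_pos,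
      abs_of_pos ((hc k).trans_le (hcM k s))]
    have h1 := hA' k s
    have h2 := hC k s
    have h3 := hM k s
    have h4 := hC0 k
    have h5 := (hc k).trans_le (hcM k s)
    gcongr
  have hd := hasDerivAt_adSTFT g hσ hσpos hxd hx'c hxb hx'b t η
  -- approximation of the STFTs with windows `g` and `g'`
  have hE := stft_approx hA1 hφ2 hApos hA' hφ'' g hx ⟨_, hxb⟩ t η hσt
  have hE' := stft_approx hA1 hφ2 hApos hA' hφ'' (SchwartzMap.derivCLM ℂ ℂ g) hx ⟨_, hxb⟩ t η hσt
  rw [coe_derivCLM, ← hΛt₀] at hE'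
  rw [← hΛ₀] at hE
  have hS : 0 < ∑ k, A k t := Finset.sum_pos (fun k _ => hApos k t) ⟨k, Finset.mem_univ k⟩
  have hΛpos : 0 < Λ₀ t := by
    rw [hΛ₀]
    have h1 := absMom_one_pos g hg0
    have h2 := absMom_nonneg g 2
    have hK' : (0 : ℝ) < K := by exact_mod_cast hK
    positivity
  have hεpos : 0 < εtilde₁ := lt_of_lt_of_le (by positivity) hεt₁
  have hVpos : 0 < ‖adSTFT σ g x t η‖ := hεpos.trans hV
  rw [omegaAdp_eq g hσt hd (norm_pos_iff.1 hVpos)]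
  set V := adSTFT σ g x t η with hVdef
  set V' := adSTFT σ (deriv g) x t η with hVderiv
  set a : Fin K → ℂ := fun ℓ => (A ℓ t : ℂ) * e2πi (φ ℓ t) with ha
  set G : Fin K → ℂ := fun ℓ => ft g (σ t * (η - deriv (φ ℓ) t)) with hG
  set E := V - ∑ ℓ, a ℓ * G ℓ with hEdef
  set E' := V' - ∑ ℓ, a ℓ * ft (deriv g) (σ t * (η - deriv (φ ℓ) t)) with hEderiv
  -- the main terms of `V` and `V'` with index `k` cancel
  have hnum : 2 * π * Complex.I * (η - deriv (φ k) t : ℝ) * V - V' / σ t =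
      2 * π * Complex.I * (∑ ℓ ∈ Finset.univ.erase k,
        a ℓ * (deriv (φ ℓ) t - deriv (φ k) t : ℝ) * G ℓ)
      + 2 * π * Complex.I * (η - deriv (φ k) t : ℝ) * E - E' / σ t := by
    have h1 : V = E + ∑ ℓ, a ℓ * G ℓ := by rw [hEdef]; ring
    have h2 : V' = E' + ∑ ℓ, a ℓ * (2 * π * Complex.I *
        (σ t * (η - deriv (φ ℓ) t) : ℝ) * G ℓ) := by
      rw [hEderiv]; simp only [ft_deriv, hG]; ring
    have h3 : ∑ ℓ ∈ Finset.univ.erase k, a ℓ * (deriv (φ ℓ) t - deriv (φ k) t : ℝ) * G ℓ =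
        ∑ ℓ, a ℓ * (deriv (φ ℓ) t - deriv (φ k) t : ℝ) * G ℓ :=
      Finset.sum_erase _ (by simp)
    have h4 : 2 * π * Complex.I * (η - deriv (φ k) t : ℝ) * (∑ ℓ, a ℓ * G ℓ)
        - (∑ ℓ, a ℓ * (2 * π * Complex.I * (σ t * (η - deriv (φ ℓ) t) : ℝ) * G ℓ)) / σ t =
        2 * π * Complex.I * ∑ ℓ, a ℓ * (deriv (φ ℓ) t - deriv (φ k) t : ℝ) * G ℓ := by
      rw [Finset.mul_sum, Finset.mul_sum, Finset.sum_div, ← Finset.sum_sub_distrib]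
      refine Finset.sum_congr rfl fun ℓ _ => ?_
      push_cast
      field_simp
      ring
    rw [h3, ← h4]
    nth_rewrite 1 [h1]
    nth_rewrite 1 [h2]
    ring
  set Q : Fin K → ℝ := fun k => ∑ ℓ ∈ Finset.univ.erase k,
    A ℓ t * |deriv (φ ℓ) t - deriv (φ k) t| *
      sSup ((fun u => ‖ft (⇑g) (u + σ t * (deriv (φ k) t - deriv (φ ℓ) t))‖) ''
              {u : ℝ | |u| < α}) with hQ
  -- the remaining main terms are estimated at the point `u = σ(t) (η - φ'_k(t))`
  have hσu : |σ t * (η - deriv (φ k) t)| < α := by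
    rw [abs_mul, abs_of_pos hσt, mul_comm]
    exact (lt_div_iff₀ hσt).1 hη
  have hsum : ‖∑ ℓ ∈ Finset.univ.erase k, a ℓ * (deriv (φ ℓ) t - deriv (φ k) t : ℝ) * G ℓ‖
      ≤ Q k := by
    refine norm_sum_le_of_le _ fun ℓ _ => ?_
    rw [norm_mul, norm_mul, ha]
    simp only [norm_mul, norm_e2πi, mul_one, Complex.norm_real, Real.norm_eq_abs,
      abs_of_pos (hApos ℓ t)]
    refine mul_le_mul_of_nonneg_left ?_ (mul_nonneg (hApos ℓ t).le (abs_nonneg _))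
    refine le_csSup ⟨∫ u, ‖g u‖, ?_⟩ ⟨σ t * (η - deriv (φ k) t), hσu, ?_⟩
    · rintro _ ⟨u, -, rfl⟩
      exact norm_ft_le _ _
    · simp only [hG]
      congr 2
      ring
  have hQsup : Q k ≤ ⨆ k, Q k := le_ciSup (Set.finite_range Q).bddAbove k
  have hbound : ‖2 * π * Complex.I * (η - deriv (φ k) t : ℝ) * V - V' / σ t‖ <
      2 * π * (α * Λ₀ t + Λt₀ t / (2 * π) + ⨆ k, Q k) := by
    have b1 : ‖E' / σ t‖ ≤ Λt₀ t := by
      rw [norm_div, Complex.norm_real, Real.norm_of_nonneg hσt.le, div_le_iff₀ hσt, mul_comm]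
      exact hE'
    have b2 : |η - deriv (φ k) t| * ‖E‖ < α * Λ₀ t :=
      calc |η - deriv (φ k) t| * ‖E‖ ≤ |η - deriv (φ k) t| * (σ t * Λ₀ t) := by gcongr
        _ < α / σ t * (σ t * Λ₀ t) := by gcongr
        _ = α * Λ₀ t := by field_simp
    rw [hnum]
    calc _ ≤ 2 * π * ‖∑ ℓ ∈ Finset.univ.erase k,
            a ℓ * (deriv (φ ℓ) t - deriv (φ k) t : ℝ) * G ℓ‖
          + 2 * π * (|η - deriv (φ k) t| * ‖E‖) + ‖E' / σ t‖ := by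
          refine (norm_sub_le _ _).trans (add_le_add ((norm_add_le _ _).trans_eq ?_) le_rfl)
          simp only [norm_mul, Complex.norm_real, Complex.norm_I, Complex.norm_ofNat,
            Real.norm_eq_abs, abs_of_pos Real.pi_pos, mul_one]
          ring
      _ < 2 * π * (⨆ k, Q k) + 2 * π * (α * Λ₀ t) + Λt₀ t := by
          have h1 := hsum.trans hQsup
          refine add_lt_add_of_lt_of_le (add_lt_add_of_le_of_lt ?_ ?_) b1 <;> gcongr
      _ = _ := by field_simp; ring
  set B := α * Λ₀ t + Λt₀ t / (2 * π) + ⨆ k, Q k with hB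
  have hBpos : 0 < B := by
    have := (norm_nonneg _).trans_lt hbound
    exact pos_of_mul_pos_right this (by positivity)
  have hbdB : bd₁ = B / εtilde₁ := by rw [hbd₁, hB]; ring
  rw [hbdB]
  refine (Complex.abs_re_le_norm _).trans_lt ?_
  rw [norm_div]
  have hden : ‖2 * π * Complex.I * V‖ = 2 * π * ‖V‖ := by
    simp only [norm_mul, Complex.norm_real, Complex.norm_I, Complex.norm_ofNat,
      Real.norm_eq_abs, abs_of_pos Real.pi_pos, mul_one]
  rw [hden]
  calc _ < 2 * π * B / (2 * π * ‖V‖) := by gcongr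
    _ = B / ‖V‖ := by field_simp
    _ ≤ B / εtilde₁ := by gcongr

end
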